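/- Let V be a nontrivial finite-dimensional complex vector space and let S, T, C be invertible linear automorphisms of V, and let p⁺, p⁻, D, ζ be nonzero complex numbers satisfying: TC = CT, SC = CS, C² = 1, (ST)³ = p⁺ · S², S² = p⁺p⁻ · C, D² = p⁺p⁻, and ζ³ = p⁺ · D⁻¹. Then there exists a group homomorphism ρ : SL(2,ℤ) → GL(V) with ρ(s) = D⁻¹ · S and ρ(t) = ζ⁻¹ · T, where s = [[0,-1],[1,0]] and t = [[1,1],[0,1]]; moreover such ρ is unique. -/

import Mathlib

open Matrix MatrixGroups

/-!
The content is that `SL(2, ℤ)` is presented by `(st)³ = s²`, `s⁴ = 1`; the scalars `D⁻¹` and `ζ⁻¹`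
are exactly those that turn the projective relations for `S` and `T` into these.

Put `u = st`, so that `u³ = s²` is central. Since `s · t = u`, `s · tst = u²`, `su = u³t` and
`su² = u³tst`, every element of a group generated by such `s` and `t` has the form `uᵏ m sⁱ` with
`i < 2` and `m` a word in `t` and `tst`. In `SL(2, ℤ)` the letters `t` and `tst` are the elementary
matrices `[[1,1],[0,1]]` and `[[1,0],[1,1]]`, so `m` has nonnegative entries. Hence if `uᵏ m sⁱ`
maps to `1`, then `u⁻ᵏ s⁻ⁱ` is nonnegative, which among the finitely many candidates happens only
for the identity; and a nonempty word `xy` cannot map to `1`, because the inverse of its first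
letter `x` has a negative entry.
-/

theorem eq_one_or_exists_mul_of_mem_closure {M : Type*} [Monoid M] {X : Set M} {m : M}
    (hm : m ∈ Submonoid.closure X) :
    m = 1 ∨ ∃ x ∈ X, ∃ y ∈ Submonoid.closure X, m = x * y := by
  induction hm using Submonoid.closure_induction_left with
  | one => exact .inl rfl
  | mul_left x hx y hy => exact .inr ⟨x, hx, y, hy, rfl⟩

section NormalForms

variable {Γ : Type*} [Group Γ] {s t : Γ}

/-- The positive words: products of the letters `t` and `tst`, which in `SL(2, ℤ)` are the two
elementary matrices with nonnegative entries. -/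
def positiveWords (s t : Γ) : Submonoid Γ :=
  Submonoid.closure {t, t * s * t}

/-- The elements `(st)ᵏ m sⁱ` with `m` a positive word and `i < 2`. The exponent `k` is an arbitrary
integer, so that the set is visibly stable under left multiplication by powers of `st`. -/
def normalForms (s t : Γ) : Set Γ :=
  {g | ∃ k : ℤ, ∃ m ∈ positiveWords s t, ∃ i < 2, g = (s * t) ^ k * m * s ^ i}

theorem one_mem_normalForms : 1 ∈ normalForms s t :=
  ⟨0, 1, one_mem _, 0, by simp⟩

theorem zpow_mul_mem_normalForms {g : Γ} (hg : g ∈ normalForms s t) (n : ℤ) :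
    (s * t) ^ n * g ∈ normalForms s t := by
  obtain ⟨k, m, hm, i, hi, rfl⟩ := hg
  exact ⟨n + k, m, hm, i, hi, by rw [_root_.zpow_add]; group⟩

theorem mul_positiveWord_mul_pow_mem_normalForms (hst : (s * t) ^ 3 = s ^ 2) {m : Γ}
    (hm : m ∈ positiveWords s t) {i : ℕ} (hi : i < 2) : s * (m * s ^ i) ∈ normalForms s t := by
  obtain rfl | ⟨x, rfl | rfl, m', hm', rfl⟩ := eq_one_or_exists_mul_of_mem_closure hm
  · interval_cases i
    · exact ⟨0, 1, one_mem _, 1, by simp⟩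
    · exact ⟨(3 : ℕ), 1, one_mem _, 0, by simp, by rw [zpow_natCast, hst]; group⟩
  · exact ⟨1, m', hm', i, hi, by group⟩
  · exact ⟨2, m', hm', i, hi, by rw [_root_.zpow_two]; group⟩

theorem commute_zpow_three_mul (hst : (s * t) ^ 3 = s ^ 2) (n : ℤ) :
    Commute s ((s * t) ^ (3 * n)) := by
  rw [zpow_mul (s * t), zpow_ofNat, hst]
  exact ((Commute.refl s).pow_right 2).zpow_right n

theorem mul_mem_normalForms (hst : (s * t) ^ 3 = s ^ 2) {g : Γ} (hg : g ∈ normalForms s t) :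
    s * g ∈ normalForms s t := by
  obtain ⟨k, m, hm, i, hi, rfl⟩ := hg
  have ht : t ∈ positiveWords s t := Submonoid.subset_closure (.inl rfl)
  have htst : t * s * t ∈ positiveWords s t := Submonoid.subset_closure (.inr rfl)
  suffices h : s * ((s * t) ^ (k % 3) * m * s ^ i) ∈ normalForms s t by
    convert zpow_mul_mem_normalForms h (3 * (k / 3)) using 1
    rw [← mul_assoc _ s, ← (commute_zpow_three_mul hst _).eq]
    conv_lhs => rw [← Int.mul_ediv_add_emod k 3, _root_.zpow_add]
    simp only [mul_assoc]
  have hk : k % 3 = 0 ∨ k % 3 = 1 ∨ k % 3 = 2 := by omega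
  obtain hk | hk | hk := hk <;> rw [hk]
  · simpa using mul_positiveWord_mul_pow_mem_normalForms hst hm hi
  · exact ⟨(3 : ℕ), t * m, mul_mem ht hm, i, hi, by rw [zpow_natCast, hst, pow_two]; group⟩
  · exact ⟨(3 : ℕ), t * s * t * m, mul_mem htst hm, i, hi, by
      rw [zpow_natCast, hst, _root_.zpow_two, pow_two]; group⟩

theorem normalForms_eq_univ (hst : (s * t) ^ 3 = s ^ 2)
    (hgen : Subgroup.closure {s, t} = ⊤) : normalForms s t = Set.univ := by
  have inv_mul {g : Γ} (hg : g ∈ normalForms s t) : s⁻¹ * g ∈ normalForms s t := by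
    convert zpow_mul_mem_normalForms (mul_mem_normalForms hst hg) (-3) using 1
    rw [_root_.zpow_neg, zpow_ofNat, hst]
    group
  refine Set.eq_univ_of_forall fun g ↦ ?_
  have hg : g ∈ Subgroup.closure {s, t} := hgen ▸ Subgroup.mem_top g
  induction hg using Subgroup.closure_induction_left with
  | one => exact one_mem_normalForms
  | mul_left x hx y _ hy =>
    obtain rfl | rfl := hx
    · exact mul_mem_normalForms hst hy
    · convert inv_mul (zpow_mul_mem_normalForms hy 1) using 1
      group
  | inv_mul_cancel x hx y _ hy =>
    obtain rfl | rfl := hx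
    · exact inv_mul hy
    · convert zpow_mul_mem_normalForms (mul_mem_normalForms hst hy) (-1) using 1
      group

end NormalForms

section NonnegativeMatrices

variable {n R : Type*} [Fintype n] [DecidableEq n] [CommRing R] [PartialOrder R]
  [IsOrderedRing R]

variable (n R) in
/-- The matrices of determinant one with nonnegative entries. -/
def nonnegMatrices : Submonoid (SpecialLinearGroup n R) where
  carrier := {A | ∀ i j, 0 ≤ A i j}
  mul_mem' {A B} hA hB i j := by
    change 0 ≤ (A.1 * B.1) i j
    rw [mul_apply]
    exact Finset.sum_nonneg fun k _ ↦ mul_nonneg (hA i k) (hB k j)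
  one_mem' i j := by
    change 0 ≤ (1 : Matrix n n R) i j
    rw [one_apply]
    split_ifs <;> simp

instance [DecidableLE R] : DecidablePred (· ∈ nonnegMatrices n R) := fun A ↦
  decidable_of_iff (∀ p : n × n, 0 ≤ A p.1 p.2) Prod.forall

end NonnegativeMatrices

section Injectivity

open ModularGroup

theorem S_mul_T_pow_three : (S * T) ^ 3 = S ^ 2 := by
  decide

theorem S_pow_four : S ^ 4 = 1 := by
  decide

theorem positiveWords_le_nonnegMatrices : positiveWords S T ≤ nonnegMatrices (Fin 2) ℤ := by
  rw [positiveWords, Submonoid.closure_le]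
  rintro _ (rfl | rfl) <;> rw [SetLike.mem_coe] <;> decide

theorem inv_notMem_nonnegMatrices_of_mem_letters :
    ∀ x ∈ ({T, T * S * T} : Set SL(2, ℤ)), x⁻¹ ∉ nonnegMatrices (Fin 2) ℤ := by
  rintro _ (rfl | rfl) <;> decide

theorem eq_zero_of_inv_mul_inv_mem_nonnegMatrices :
    ∀ k < 6, ∀ i < 2, ((S * T) ^ k)⁻¹ * (S ^ i)⁻¹ ∈ nonnegMatrices (Fin 2) ℤ → k = 0 ∧ i = 0 := by
  decide

variable {Γ : Type*} [Group Γ] {s t m : Γ} {f : Γ →* SL(2, ℤ)}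

theorem map_mem_nonnegMatrices_of_mem_positiveWords (hs : f s = S) (ht : f t = T)
    (hm : m ∈ positiveWords s t) : f m ∈ nonnegMatrices (Fin 2) ℤ := by
  have hmap : (positiveWords s t).map f = positiveWords S T := by
    simp only [positiveWords, MonoidHom.map_mclosure, Set.image_pair, map_mul, hs, ht]
  exact positiveWords_le_nonnegMatrices (hmap ▸ Submonoid.mem_map_of_mem f hm)

theorem eq_one_of_mem_positiveWords_of_map_eq_one (hs : f s = S) (ht : f t = T)
    (hm : m ∈ positiveWords s t) (hfm : f m = 1) : m = 1 := by
  obtain h | ⟨x, hx, y, hy, rfl⟩ := eq_one_or_exists_mul_of_mem_closure hm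
  · exact h
  · have hfx : f x ∈ ({T, T * S * T} : Set SL(2, ℤ)) := by
      obtain rfl | rfl := hx <;> simp [hs, ht]
    have hfy : f y = (f x)⁻¹ := eq_inv_of_mul_eq_one_right (by rw [← map_mul, hfm])
    have hpos : f y ∈ nonnegMatrices (Fin 2) ℤ :=
      map_mem_nonnegMatrices_of_mem_positiveWords hs ht hy
    exact absurd (hfy ▸ hpos) (inv_notMem_nonnegMatrices_of_mem_letters _ hfx)

theorem injective_of_map_eq_S_of_map_eq_T (hs : f s = S) (ht : f t = T)
    (hst : (s * t) ^ 3 = s ^ 2) (hs4 : s ^ 4 = 1) (hgen : Subgroup.closure {s, t} = ⊤) :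
    Function.Injective f := by
  rw [injective_iff_map_eq_one]
  intro g hg
  obtain ⟨k, m, hm, i, hi, rfl⟩ : g ∈ normalForms s t := normalForms_eq_univ hst hgen ▸ trivial
  have hst6 : (s * t) ^ 6 = 1 := by rw [pow_mul _ 3 2, hst, ← pow_mul, hs4]
  obtain ⟨r, hr⟩ := Int.eq_ofNat_of_zero_le (k.emod_nonneg (by norm_num : (6 : ℤ) ≠ 0))
  have hr6 : r < 6 := by omega
  rw [zpow_eq_zpow_emod' k hst6, Nat.cast_ofNat, hr, zpow_natCast] at hg ⊢
  have hfm : f m = ((S * T) ^ r)⁻¹ * (S ^ i)⁻¹ :=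
    eq_mul_inv_of_mul_eq <| eq_inv_of_mul_eq_one_right <| by
      simpa only [map_mul, map_pow, hs, ht, mul_assoc] using hg
  obtain ⟨rfl, rfl⟩ := eq_zero_of_inv_mul_inv_mem_nonnegMatrices r hr6 i hi
    (hfm ▸ map_mem_nonnegMatrices_of_mem_positiveWords hs ht hm)
  simpa using eq_one_of_mem_positiveWords_of_map_eq_one hs ht hm (by simpa using hfm)

end Injectivity

section Presentation

open ModularGroup

/-- The relators `(st)³s⁻²` and `s⁴` of the modular group, where `s` and `t` are the free generators
with indices `0` and `1`. -/
def modularRelators : Set (FreeGroup (Fin 2)) :=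
  {(.of 0 * .of 1) ^ 3 * (.of 0 ^ 2)⁻¹, .of 0 ^ 4}

theorem forall_modularRelators_lift_eq_one_iff {G : Type*} [Group G] {f : Fin 2 → G} :
    (∀ r ∈ modularRelators, FreeGroup.lift f r = 1) ↔
      (f 0 * f 1) ^ 3 = f 0 ^ 2 ∧ f 0 ^ 4 = 1 := by
  simp [modularRelators, mul_inv_eq_one]

theorem closure_modularRelators_generators :
    Subgroup.closure {(.of 0 : PresentedGroup modularRelators), .of 1} = ⊤ := by
  rw [← PresentedGroup.closure_range_of]
  congr
  ext
  simp [eq_comm]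

/-- The homomorphism from the group presented by `modularRelators` to `SL(2, ℤ)` that sends the
generators to `[[0,-1],[1,0]]` and `[[1,1],[0,1]]`. -/
def presentedToSL2Z : PresentedGroup modularRelators →* SL(2, ℤ) :=
  PresentedGroup.toGroup (f := ![S, T]) <|
    forall_modularRelators_lift_eq_one_iff.2 ⟨S_mul_T_pow_three, S_pow_four⟩

theorem presentedToSL2Z_of_zero : presentedToSL2Z (.of 0) = S :=
  PresentedGroup.toGroup.of _

theorem presentedToSL2Z_of_one : presentedToSL2Z (.of 1) = T :=
  PresentedGroup.toGroup.of _

theorem presentedToSL2Z_injective : Function.Injective presentedToSL2Z :=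
  injective_of_map_eq_S_of_map_eq_T presentedToSL2Z_of_zero presentedToSL2Z_of_one
    (PresentedGroup.mk_eq_mk_of_mul_inv_mem (.inl rfl)) (PresentedGroup.one_of_mem (.inr rfl))
    closure_modularRelators_generators

theorem presentedToSL2Z_surjective : Function.Surjective presentedToSL2Z := by
  rw [← MonoidHom.range_eq_top, MonoidHom.range_eq_map, ← closure_modularRelators_generators,
    MonoidHom.map_closure, Set.image_pair, presentedToSL2Z_of_zero, presentedToSL2Z_of_one,
    SpecialLinearGroup.SL2Z_generators]

theorem existsUnique_monoidHom_SL2Z {G : Type*} [Group G] {a b : G}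
    (hab : (a * b) ^ 3 = a ^ 2) (ha : a ^ 4 = 1) :
    ∃! ρ : SL(2, ℤ) →* G, ρ S = a ∧ ρ T = b := by
  let e := MulEquiv.ofBijective presentedToSL2Z
    ⟨presentedToSL2Z_injective, presentedToSL2Z_surjective⟩
  have heS : e.symm S = .of 0 := e.symm_apply_eq.2 presentedToSL2Z_of_zero.symm
  have heT : e.symm T = .of 1 := e.symm_apply_eq.2 presentedToSL2Z_of_one.symm
  let φ : PresentedGroup modularRelators →* G := PresentedGroup.toGroup (f := ![a, b]) <|
    forall_modularRelators_lift_eq_one_iff.2 ⟨hab, ha⟩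
  have hS : φ (e.symm S) = a := by simp [heS, φ]
  have hT : φ (e.symm T) = b := by simp [heT, φ]
  refine ⟨φ.comp e.symm.toMonoidHom, ⟨hS, hT⟩, fun σ ⟨hσS, hσT⟩ ↦ ?_⟩
  apply MonoidHom.eq_of_eqOn_dense SpecialLinearGroup.SL2Z_generators
  rintro _ (rfl | rfl)
  · exact hσS.trans hS.symm
  · exact hσT.trans hT.symm

end Presentation

theorem modular_representation_well_defined_general {K A : Type*} [Field K] [Ring A] [Algebra K A]
    (S T C : Aˣ) (pPlus pMinus D ζ : K) (hD : D ≠ 0) (hζ : ζ ≠ 0) (hC2 : C ^ 2 = 1)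
    (hST : ((S : A) * (T : A)) ^ 3 = pPlus • (S : A) ^ 2)
    (hS2 : (S : A) ^ 2 = (pPlus * pMinus) • (C : A))
    (hD2 : D ^ 2 = pPlus * pMinus) (hζ3 : ζ ^ 3 = pPlus * D⁻¹) :
    ∃! ρ : SL(2, ℤ) →* Aˣ,
      (ρ ModularGroup.S : A) = D⁻¹ • (S : A) ∧ (ρ ModularGroup.T : A) = ζ⁻¹ • (T : A) := by
  let s : Aˣ := (Units.mk0 D hD)⁻¹ • S
  let t : Aˣ := (Units.mk0 ζ hζ)⁻¹ • T
  have hs : (s : A) = D⁻¹ • (S : A) := by simp [s, Units.smul_def]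
  have ht : (t : A) = ζ⁻¹ • (T : A) := by simp [t, Units.smul_def]
  have hs2 : s ^ 2 = C := by
    ext
    rw [Units.val_pow_eq_pow_val, hs, smul_pow, hS2, ← hD2, inv_pow,
      inv_smul_smul₀ (pow_ne_zero 2 hD)]
  have hs4 : s ^ 4 = 1 := by rw [pow_mul _ 2 2, hs2, hC2]
  have hst : (s * t) ^ 3 = s ^ 2 := by
    have hscalar : (D⁻¹ * ζ⁻¹) ^ 3 * pPlus = D⁻¹ ^ 2 := by
      rw [(eq_mul_inv_iff_mul_eq₀ hD).1 hζ3 |>.symm]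
      field_simp
    ext
    rw [Units.val_pow_eq_pow_val, Units.val_pow_eq_pow_val, Units.val_mul, hs, ht,
      smul_mul_smul_comm, smul_pow, hST, smul_smul, hscalar, smul_pow]
  simpa only [Units.ext_iff, hs, ht] using existsUnique_monoidHom_SL2Z hst hs4

/-- Given a nontrivial finite dimensional complex vector space `V`, invertible linear
automorphisms `S, T, C` of `V` and nonzero scalars `p⁺, p⁻, D, ζ` satisfying the relations
`TC = CT`, `SC = CS`, `C² = 1`, `(ST)³ = p⁺·S²`, `S² = p⁺p⁻·C`, `D² = p⁺p⁻` and
`ζ³ = p⁺·D⁻¹`, there is a unique group homomorphism `ρ : SL(2, ℤ) → GL(V)` with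
`ρ(s) = D⁻¹·S` and `ρ(t) = ζ⁻¹·T`, where `s = [[0,-1],[1,0]]` and `t = [[1,1],[0,1]]`. -/
theorem modular_representation_well_defined
    {V : Type*} [AddCommGroup V] [Module ℂ V] [FiniteDimensional ℂ V] [Nontrivial V]
    (S T C : (Module.End ℂ V)ˣ) (pPlus pMinus D ζ : ℂ)
    (hpPlus : pPlus ≠ 0) (hpMinus : pMinus ≠ 0) (hD : D ≠ 0) (hζ : ζ ≠ 0)
    (hTC : T * C = C * T) (hSC : S * C = C * S) (hC2 : C ^ 2 = 1)
    (hST : ((S : Module.End ℂ V) * (T : Module.End ℂ V)) ^ 3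
      = pPlus • (S : Module.End ℂ V) ^ 2)
    (hS2 : (S : Module.End ℂ V) ^ 2 = (pPlus * pMinus) • (C : Module.End ℂ V))
    (hD2 : D ^ 2 = pPlus * pMinus)
    (hζ3 : ζ ^ 3 = pPlus * D⁻¹) :
    ∃! ρ : SL(2, ℤ) →* (Module.End ℂ V)ˣ,
      (ρ ModularGroup.S : Module.End ℂ V) = D⁻¹ • (S : Module.End ℂ V) ∧
      (ρ ModularGroup.T : Module.End ℂ V) = ζ⁻¹ • (T : Module.End ℂ V) := by
  exact modular_representation_well_defined_general S T C pPlus pMinus D ζ hD hζ hC2 hST hS2 hD2 hζ3
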